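/- Minimality of inferred patterns: let x⃗ = (x₁,…,xₙ) be pairwise distinct variables and M learning data with n columns, and suppose ((x₁,…,xₙ), [M/x⃗]) ⟶* (t₁, Θ₁) where (t₁, Θ₁) admits no further ⟶ step. If t₀ is a solvable tuple pattern with M ⊨ t₀, then L(t₁) ⊇ L(t₀) implies L(t₁) = L(t₀). -/

import Mathlib

namespace STPaper

variable {A V : Type}

/-- A word over the alphabet `A`. -/
abbrev Word (A : Type) := List A

/-- A pattern: a finite word over `A ⊕ V` (letters and variables). -/
abbrev Pat (A V : Type) := List (A ⊕ V)

/-- A tuple pattern: a finite tuple of patterns. -/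
abbrev TP (A V : Type) := List (Pat A V)

/-- A column of learning data: one word per row. -/
abbrev Col (A : Type) := List (Word A)

/-- Learning data, represented as its list of columns. -/
abbrev Data (A : Type) := List (Col A)

/-- A data-substitution `[M/x⃗]`: the number `m` of rows together with the list pairing each
variable of `x⃗` with the corresponding column of `M`. -/
structure DSub (A V : Type) where
  m : ℕ
  entries : List (V × Col A)

/-- Apply a word-valued substitution to a pattern. -/
def substPatW (θ : V → Word A) (p : Pat A V) : Word A :=
  (p.map (Sum.elim (fun a => [a]) θ)).flatten

/-- Look up the column assigned to a variable by a data-substitution (default: all-ε). -/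
def lookupCol [DecidableEq V] (E : List (V × Col A)) (x : V) : Col A :=
  match E.find? (fun e => decide (e.1 = x)) with
  | some e => e.2
  | none => []

/-- The substitution corresponding to the `i`-th row of a data-substitution. -/
def DSub.rowSub [DecidableEq V] (Θ : DSub A V) (i : ℕ) : V → Word A :=
  fun x => (lookupCol Θ.entries x).getD i []

/-- `Θ.apply t` : the matrix `Θt` (as a list of columns, each of length `Θ.m`). -/
def DSub.apply [DecidableEq V] (Θ : DSub A V) (t : TP A V) : Data A :=
  t.map (fun p => (List.range Θ.m).map (fun i => substPatW (Θ.rowSub i) p))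

/-- Well-formedness of a data-substitution: pairwise-distinct variables and
all columns of length `m`. -/
def DSub.WF (Θ : DSub A V) : Prop :=
  (Θ.entries.map Prod.fst).Nodup ∧ ∀ e ∈ Θ.entries, e.2.length = Θ.m

/-- The free variables of a tuple pattern. -/
def fvTP (t : TP A V) : Set V := {x | Sum.inr x ∈ t.flatten}

/-- Substitution of a single pattern `q` for the variable `x` in a pattern. -/
def substVar [DecidableEq A] [DecidableEq V] (x : V) (q : Pat A V) (p : Pat A V) : Pat A V :=
  (p.map (fun s => if s = Sum.inr x then q else [s])).flatten

/-- Substitution of a single pattern `q` for the variable `x` in a tuple pattern. -/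
def substVarTP [DecidableEq A] [DecidableEq V] (x : V) (q : Pat A V) (t : TP A V) : TP A V :=
  t.map (substVar x q)

/-- Simultaneous substitution `[qs/xs]p` of the patterns `qs` for the variables `xs`. -/
def substVars [DecidableEq V] (xs : List V) (qs : List (Pat A V)) (p : Pat A V) : Pat A V :=
  (p.map (fun s =>
    match s with
    | Sum.inl a => [Sum.inl a]
    | Sum.inr x =>
      match (xs.zip qs).find? (fun e => decide (e.1 = x)) with
      | some e => e.2
      | none => [Sum.inr x])).flatten

/-- Simultaneous substitution `[qs/xs]t` on a tuple pattern. -/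
def substVarsTP [DecidableEq V] (xs : List V) (qs : List (Pat A V)) (t : TP A V) : TP A V :=
  t.map (substVars xs qs)

/-- A column is the all-ε column. -/
def allEps (c : Col A) : Prop := ∀ w ∈ c, w = []

/-- The trivial tuple pattern `(x₁, …, xₙ)`. -/
def trivTP (xs : List V) : TP A V := xs.map (fun x => [Sum.inr x])

section
variable [DecidableEq A] [DecidableEq V]

/-- The rewriting relation ⟶ on pairs of a tuple pattern and a data-substitution. -/
inductive Step : (TP A V × DSub A V) → (TP A V × DSub A V) → Prop
  | pre (t : TP A V) (m : ℕ) (E : List (V × Col A)) (i j : ℕ)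
      (hi : i < E.length) (hj : j < E.length) (hij : i ≠ j)
      (s : Col A) (hslen : s.length = (E[i]'hi).2.length)
      (hpre : (E[j]'hj).2 = List.zipWith (· ++ ·) (E[i]'hi).2 s)
      (hne : ¬ allEps (E[i]'hi).2)
      (x' : V) (hx1 : x' ∉ E.map Prod.fst) (hx2 : Sum.inr x' ∉ t.flatten) :
      Step (t, ⟨m, E⟩)
        (substVarTP (E[j]'hj).1 [Sum.inr (E[i]'hi).1, Sum.inr x'] t,
         ⟨m, E.set j (x', s)⟩)
  | cpre (t : TP A V) (m : ℕ) (E : List (V × Col A)) (j : ℕ)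
      (hj : j < E.length) (a : A) (s : Col A)
      (hpre : (E[j]'hj).2 = s.map (fun w => a :: w))
      (x' : V) (hx1 : x' ∉ E.map Prod.fst) (hx2 : Sum.inr x' ∉ t.flatten) :
      Step (t, ⟨m, E⟩)
        (substVarTP (E[j]'hj).1 [Sum.inl a, Sum.inr x'] t, ⟨m, E.set j (x', s)⟩)
  | eps (t : TP A V) (m : ℕ) (E : List (V × Col A)) (j : ℕ)
      (hj : j < E.length) (heps : allEps (E[j]'hj).2) :
      Step (t, ⟨m, E⟩) (substVarTP (E[j]'hj).1 [] t, ⟨m, E.eraseIdx j⟩)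

/-- `n`-step rewriting. -/
def StepN : ℕ → (TP A V × DSub A V) → (TP A V × DSub A V) → Prop
  | 0 => fun c₁ c₂ => c₁ = c₂
  | n + 1 => fun c₁ c₃ => ∃ c₂, Step c₁ c₂ ∧ StepN n c₂ c₃

end

/-- The reduction relation ⇒ on tuple patterns. -/
inductive PStep : TP A V → TP A V → Prop
  | pre (t : TP A V) (i j : ℕ) (hi : i < t.length) (hj : j < t.length)
      (hij : i ≠ j) (p' : Pat A V)
      (hdec : t[j]'hj = (t[i]'hi) ++ p') (hne : t[i]'hi ≠ []) :
      PStep t (t.set j p')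
  | cpre (t : TP A V) (j : ℕ) (hj : j < t.length) (a : A) (p' : Pat A V)
      (hdec : t[j]'hj = Sum.inl a :: p') :
      PStep t (t.set j p')
  | eps (t : TP A V) (j : ℕ) (hj : j < t.length) (heps : t[j]'hj = []) :
      PStep t (t.eraseIdx j)

/-- A tuple pattern is solvable if it reduces to a trivial tuple of pairwise
distinct variables. -/
def Solvable (t : TP A V) : Prop :=
  ∃ ys : List V, ys.Nodup ∧ Relation.ReflTransGen PStep t (trivTP ys)

/-- The language of a tuple pattern. -/
def lang (t : TP A V) : Set (List (Word A)) :=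
  {w | ∃ θ : V → Word A, w = t.map (substPatW θ)}

/-- `M ⊨ t` : there is a data-substitution `Θ` (with `rows` rows) with `Θt = M`. -/
def Models [DecidableEq V] (M : Data A) (rows : ℕ) (t : TP A V) : Prop :=
  ∃ Θ : DSub A V, Θ.m = rows ∧ Θ.WF ∧ Θ.apply t = M

/-- `M ⊨ₛ t` : additionally, no variable of `t` is mapped to ε in every row. -/
def SModels [DecidableEq V] (M : Data A) (rows : ℕ) (t : TP A V) : Prop :=
  ∃ Θ : DSub A V, Θ.m = rows ∧ Θ.WF ∧ Θ.apply t = M ∧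
    ∀ x ∈ fvTP t, ¬ allEps (lookupCol Θ.entries x)

/-- Renaming the variables of a tuple pattern. -/
def renameTP (ρ : V → V) (t : TP A V) : TP A V :=
  t.map (List.map (Sum.map id ρ))

/-- The measure `#t` of a tuple pattern. -/
def tpMeasure (t : TP A V) : ℕ := (t.map List.length).sum + t.length

/-- `size(M)`. -/
def dataSize (M : Data A) : ℕ :=
  (M.map (fun c => (c.map (fun w => w.length + 1)).sum)).sum

/-- Learning data (as columns) whose rows enumerate the given list of tuples. -/
def colsOfRows (n : ℕ) (rows : List (List (Word A))) : Data A :=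
  (List.range n).map (fun j => rows.map (fun r => r.getD j []))

/-- `m ⊨ₛ t` for a (possibly infinite) set of tuples of words. -/
def SetSModels (S : Set (List (Word A))) (t : TP A V) : Prop :=
  ∃ θ : S → V → Word A,
    (∀ v : S, (v : List (Word A)) = t.map (substPatW (θ v))) ∧
    ∀ x ∈ fvTP t, ∃ v : S, θ v x ≠ []

/-- A rule instance of the ⇒ relation. -/
inductive RuleInst (A V : Type) where
  | pre (i j : ℕ)
  | cpre (j : ℕ) (a : A)
  | eps (j : ℕ)

/-- The reduction step derived by a given rule instance. -/
def RuleStep : RuleInst A V → TP A V → TP A V → Prop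
  | .pre i j, t, t' => ∃ (hi : i < t.length) (hj : j < t.length),
      i ≠ j ∧ t[i]'hi ≠ [] ∧ ∃ p', t[j]'hj = (t[i]'hi) ++ p' ∧ t' = t.set j p'
  | .cpre j a, t, t' => ∃ (_ : j < t.length) (p' : Pat A V),
      t.getD j [] = Sum.inl a :: p' ∧ t' = t.set j p'
  | .eps j, t, t' => ∃ (_ : j < t.length), t.getD j [] = ([] : Pat A V) ∧ t' = t.eraseIdx j

/-- Well-definedness of the residual of a tuple pattern along a rule instance. -/
def ResDefined : RuleInst A V → TP A V → Prop
  | .pre i j, t => i < t.length ∧ j < t.length ∧ (t.getD i []) <+: (t.getD j [])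
  | .cpre j a, t => j < t.length ∧ ∃ p', t.getD j [] = Sum.inl a :: p'
  | .eps j, t => j < t.length ∧ t.getD j [] = ([] : Pat A V)

/-- The residual of a tuple pattern along a rule instance. -/
def residual : RuleInst A V → TP A V → TP A V
  | .pre i j, t => t.set j ((t.getD j []).drop (t.getD i []).length)
  | .cpre j _, t => t.set j ((t.getD j []).drop 1)
  | .eps j, t => t.eraseIdx j

/-- The reduction relation ⇒ extended with the postfix rules. -/
inductive PStepX : TP A V → TP A V → Prop
  | pre (t : TP A V) (i j : ℕ) (hi : i < t.length) (hj : j < t.length)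
      (hij : i ≠ j) (p' : Pat A V)
      (hdec : t[j]'hj = (t[i]'hi) ++ p') (hne : t[i]'hi ≠ []) :
      PStepX t (t.set j p')
  | cpre (t : TP A V) (j : ℕ) (hj : j < t.length) (a : A) (p' : Pat A V)
      (hdec : t[j]'hj = Sum.inl a :: p') :
      PStepX t (t.set j p')
  | eps (t : TP A V) (j : ℕ) (hj : j < t.length) (heps : t[j]'hj = []) :
      PStepX t (t.eraseIdx j)
  | post (t : TP A V) (i j : ℕ) (hi : i < t.length) (hj : j < t.length)
      (hij : i ≠ j) (p' : Pat A V)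
      (hdec : t[j]'hj = p' ++ (t[i]'hi)) (hne : t[i]'hi ≠ []) :
      PStepX t (t.set j p')
  | cpost (t : TP A V) (j : ℕ) (hj : j < t.length) (a : A) (p' : Pat A V)
      (hdec : t[j]'hj = p' ++ [Sum.inl a]) :
      PStepX t (t.set j p')

/-!
The variables of `t₁` can be expressed by the letters and the components of `t₁` using concatenation
and left cancellation, because every step of `⟶` can be undone by these operations. If
`L(t₀) ⊆ L(t₁)`, then for every substitution `θ` there is some `η θ` with `θ t₀ = (η θ) t₁`. The
patterns `p` such that `(η θ) p` is the value at `θ` of a pattern not depending on `θ` form a left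
unitary submonoid, since a pattern is determined by its values when there are two letters. It
contains the letters and the components of `t₁`, hence also its variables, and so `t₀ = σ t₁` for a
pattern-valued substitution `σ`.

As `M ⊨ σ t₁` and no rule applies to `(t₁, Θ₁)`, the letters and the patterns `σ x` form a prefix
code, and the submonoid generated by a prefix code is left unitary. It contains the components of
`t₀`, so by solvability it contains the variables of `t₀`. A variable in this submonoid is itself a
codeword, and the codeword `σ x` beginning with it is equal to it. Therefore `σ` is injective on
variables and renames them.
-/

open scoped Computability

section LeftUnitary

variable {α β : Type*} {G H L : Language α} {u v w : List α}

/-- A left unitary submonoid of the free monoid on `α`: a set of words containing `ε` and closed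
under concatenation and left cancellation. -/
structure IsLeftUnitary (L : Language α) : Prop where
  nil_mem : [] ∈ L
  append_mem {u v : List α} : u ∈ L → v ∈ L → u ++ v ∈ L
  of_append_mem {u v : List α} : u ∈ L → u ++ v ∈ L → v ∈ L

theorem IsLeftUnitary.append_mem_iff (hL : IsLeftUnitary L) (hu : u ∈ L) :
    u ++ v ∈ L ↔ v ∈ L :=
  ⟨hL.of_append_mem hu, hL.append_mem hu⟩

theorem isLeftUnitary_forall_mem (S : Set α) :
    IsLeftUnitary ({w | ∀ s ∈ w, s ∈ S} : Language α) where
  nil_mem := fun _ hs => absurd hs List.not_mem_nil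
  append_mem hu hv := fun s hs => (List.mem_append.1 hs).elim (hu s) (hv s)
  of_append_mem _ huv := fun s hs => huv s (List.mem_append_right _ hs)

theorem isLeftUnitary_flatMap_eq (f g : α → List β) :
    IsLeftUnitary ({w | w.flatMap f = w.flatMap g} : Language α) where
  nil_mem := rfl
  append_mem {u v} (hu : u.flatMap f = u.flatMap g) (hv : v.flatMap f = v.flatMap g) := by
    change (u ++ v).flatMap f = (u ++ v).flatMap g
    rw [List.flatMap_append, List.flatMap_append, hu, hv]
  of_append_mem {u v} (hu : u.flatMap f = u.flatMap g)
      (huv : (u ++ v).flatMap f = (u ++ v).flatMap g) := by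
    rw [List.flatMap_append, List.flatMap_append, hu] at huv
    exact List.append_cancel_left huv

theorem IsLeftUnitary.flatMap_preimage {K : Language β} (hK : IsLeftUnitary K) (f : α → List β) :
    IsLeftUnitary ({w | w.flatMap f ∈ K} : Language α) where
  nil_mem := hK.nil_mem
  append_mem {u v} (hu : u.flatMap f ∈ K) (hv : v.flatMap f ∈ K) := by
    change (u ++ v).flatMap f ∈ K
    rw [List.flatMap_append]
    exact hK.append_mem hu hv
  of_append_mem {u v} (hu : u.flatMap f ∈ K) (huv : (u ++ v).flatMap f ∈ K) := by
    rw [List.flatMap_append] at huv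
    exact hK.of_append_mem hu huv

/-- The smallest left unitary submonoid containing `G`. -/
def leftUnitaryClosure (G : Language α) : Language α :=
  {w | ∀ L : Language α, IsLeftUnitary L → G ≤ L → w ∈ L}

theorem isLeftUnitary_leftUnitaryClosure (G : Language α) :
    IsLeftUnitary (leftUnitaryClosure G) where
  nil_mem := fun _ hL _ => hL.nil_mem
  append_mem hu hv := fun L hL hG => hL.append_mem (hu L hL hG) (hv L hL hG)
  of_append_mem hu huv := fun L hL hG => hL.of_append_mem (hu L hL hG) (huv L hL hG)

theorem le_leftUnitaryClosure (G : Language α) : G ≤ leftUnitaryClosure G :=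
  fun _ hw _ _ hG => hG hw

theorem leftUnitaryClosure_le (hL : IsLeftUnitary L) : leftUnitaryClosure G ≤ L ↔ G ≤ L :=
  ⟨(le_leftUnitaryClosure G).trans, fun hG _ hw => hw L hL hG⟩

theorem leftUnitaryClosure_mono (h : G ≤ H) : leftUnitaryClosure G ≤ leftUnitaryClosure H :=
  (leftUnitaryClosure_le (isLeftUnitary_leftUnitaryClosure H)).2 (h.trans (le_leftUnitaryClosure H))

theorem leftUnitaryClosure_insert_le (hL : IsLeftUnitary L) :
    leftUnitaryClosure (insert w G) ≤ L ↔ w ∈ L ∧ G ≤ L :=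
  (leftUnitaryClosure_le hL).trans Set.insert_subset_iff

theorem leftUnitaryClosure_insert_of_mem (hw : w ∈ leftUnitaryClosure G) :
    leftUnitaryClosure (insert w G) = leftUnitaryClosure G :=
  le_antisymm
    ((leftUnitaryClosure_insert_le (isLeftUnitary_leftUnitaryClosure G)).2
      ⟨hw, le_leftUnitaryClosure G⟩)
    (leftUnitaryClosure_mono (Set.subset_insert w G))

theorem leftUnitaryClosure_insert_append (hu : u ∈ leftUnitaryClosure G) :
    leftUnitaryClosure (insert (u ++ v) G) = leftUnitaryClosure (insert v G) := by
  have mem_iff (w : List α) : u ++ v ∈ leftUnitaryClosure (insert w G) ↔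
      v ∈ leftUnitaryClosure (insert w G) :=
    (isLeftUnitary_leftUnitaryClosure _).append_mem_iff
      (leftUnitaryClosure_mono (Set.subset_insert w G) hu)
  have self_mem (w : List α) : w ∈ leftUnitaryClosure (insert w G) :=
    le_leftUnitaryClosure _ (Set.mem_insert w G)
  have le (w : List α) : G ≤ leftUnitaryClosure (insert w G) :=
    (Set.subset_insert w G).trans (le_leftUnitaryClosure _)
  apply le_antisymm <;> rw [leftUnitaryClosure_insert_le (isLeftUnitary_leftUnitaryClosure _)]
  · exact ⟨(mem_iff v).2 (self_mem v), le v⟩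
  · exact ⟨(mem_iff (u ++ v)).1 (self_mem (u ++ v)), le (u ++ v)⟩

end LeftUnitary

section PrefixCode

variable {α : Type*} {C : Language α}

/-- A prefix code: a set of nonempty words none of which is a proper prefix of another. -/
structure IsPrefixCode (C : Language α) : Prop where
  nil_notMem : [] ∉ C
  eq_of_prefix {u v : List α} : u ∈ C → v ∈ C → u <+: v → u = v

theorem IsPrefixCode.eq_of_append_eq_append (hC : IsPrefixCode C) {u v w z : List α}
    (hu : u ∈ C) (hv : v ∈ C) (h : u ++ w = v ++ z) : u = v := by
  rcases List.prefix_or_prefix_of_prefix ⟨w, h⟩ (List.prefix_append v z) with huv | hvu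
  · exact hC.eq_of_prefix hu hv huv
  · exact (hC.eq_of_prefix hv hu hvu).symm

theorem IsPrefixCode.mem_kstar_of_flatten_append (hC : IsPrefixCode C) {us : List (List α)}
    {v : List α} (hus : ∀ u ∈ us, u ∈ C) (h : us.flatten ++ v ∈ C∗) : v ∈ C∗ := by
  induction us with
  | nil => exact h
  | cons u us ih =>
    rw [List.forall_mem_cons] at hus
    refine ih hus.2 ?_
    obtain ⟨_ | ⟨w, ws⟩, hflat, hws⟩ := Language.mem_kstar.1 h
    · have hnil : u = [] := by simp_all
      exact absurd (hnil ▸ hus.1) hC.nil_notMem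
    · rw [List.forall_mem_cons] at hws
      rw [List.flatten_cons, List.append_assoc, List.flatten_cons] at hflat
      obtain rfl := hC.eq_of_append_eq_append hus.1 hws.1 hflat
      rw [List.append_cancel_left hflat]
      exact Language.join_mem_kstar hws.2

theorem IsPrefixCode.isLeftUnitary_kstar (hC : IsPrefixCode C) : IsLeftUnitary C∗ where
  nil_mem := Language.nil_mem_kstar C
  append_mem hu hv := by
    have h := Language.append_mem_mul hu hv
    rwa [kstar_mul_kstar] at h
  of_append_mem hu huv := by
    obtain ⟨us, rfl, hus⟩ := Language.mem_kstar.1 hu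
    exact hC.mem_kstar_of_flatten_append hus huv

theorem singleton_mem_of_mem_kstar {a : α} (h : [a] ∈ C∗) : [a] ∈ C := by
  obtain ⟨_ | ⟨u, us⟩, hflat, hus⟩ := Language.mem_kstar_iff_exists_nonempty.1 h
  · simp at hflat
  · have hu := hus u List.mem_cons_self
    rcases List.append_eq_singleton_iff.1 hflat.symm with ⟨hnil, -⟩ | ⟨rfl, -⟩
    · exact absurd hnil hu.2
    · exact hu.1

end PrefixCode

section Separation

variable {α β ι : Type*} [Nonempty ι] {f : ι → α → β}

theorem prefix_of_forall_map_prefix (hf : ∀ a b, (∀ i, f i a = f i b) → a = b) {p q : List α}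
    (h : ∀ i, p.map (f i) <+: q.map (f i)) : p <+: q := by
  induction p generalizing q with
  | nil => exact List.nil_prefix
  | cons a p ih =>
    cases q with
    | nil => simpa using h (Classical.arbitrary ι)
    | cons b q =>
      simp only [List.map_cons, List.cons_prefix_cons, forall_and] at h
      exact List.cons_prefix_cons.2 ⟨hf a b h.1, ih h.2⟩

end Separation

section Substitution

variable {s : A ⊕ V} {p q : Pat A V} {θ θ' : V → Word A}

theorem substPatW_eq_flatMap (θ : V → Word A) (p : Pat A V) :
    substPatW θ p = p.flatMap (Sum.elim (fun a => [a]) θ) := rfl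

@[simp]
theorem substPatW_cons (θ : V → Word A) (s : A ⊕ V) (p : Pat A V) :
    substPatW θ (s :: p) = Sum.elim (fun a => [a]) θ s ++ substPatW θ p := rfl

@[simp]
theorem substPatW_nil (θ : V → Word A) : substPatW θ ([] : Pat A V) = [] := rfl

@[simp]
theorem substPatW_append (θ : V → Word A) (p q : Pat A V) :
    substPatW θ (p ++ q) = substPatW θ p ++ substPatW θ q :=
  List.flatMap_append

theorem substPatW_congr (h : ∀ x, Sum.inr x ∈ p → θ x = θ' x) :
    substPatW θ p = substPatW θ' p := by
  refine congrArg List.flatten (List.map_congr_left ?_)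
  rintro (a | x) hs
  exacts [rfl, h x hs]

theorem substPatW_singleton_comp (θ : V → A) (p : Pat A V) :
    substPatW (fun x => [θ x]) p = p.map (Sum.elim id θ) := by
  induction p with
  | nil => rfl
  | cons s p ih => cases s <;> simp [ih]

theorem eq_of_forall_sumElim_eq [Nontrivial A] {r s : A ⊕ V}
    (h : ∀ θ : V → A, Sum.elim id θ r = Sum.elim id θ s) : r = s := by
  classical
  rcases r with a | x <;> rcases s with b | y
  · obtain ⟨c⟩ : Nonempty A := inferInstance
    exact congrArg Sum.inl (h fun _ => c)
  · obtain ⟨c, hc⟩ := exists_ne a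
    exact absurd (h fun _ => c).symm hc
  · obtain ⟨c, hc⟩ := exists_ne b
    exact absurd (h fun _ => c) hc
  · obtain ⟨a, b, hab⟩ := exists_pair_ne A
    by_contra hxy
    have hyx : y ≠ x := fun e => hxy (e ▸ rfl)
    exact hab (by simpa [hyx] using h fun z => if z = x then a else b)

theorem prefix_of_forall_substPatW_prefix [Nontrivial A]
    (h : ∀ θ : V → Word A, substPatW θ p <+: substPatW θ q) : p <+: q := by
  refine prefix_of_forall_map_prefix (f := fun θ : V → A => Sum.elim id θ)
    (fun _ _ => eq_of_forall_sumElim_eq) fun θ => ?_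
  simpa only [substPatW_singleton_comp] using h fun x => [θ x]

theorem eq_of_forall_substPatW_eq [Nontrivial A]
    (h : ∀ θ : V → Word A, substPatW θ p = substPatW θ q) : p = q := by
  have hpq : p <+: q := prefix_of_forall_substPatW_prefix fun θ => by rw [h θ]
  have hqp : q <+: p := prefix_of_forall_substPatW_prefix fun θ => by rw [h θ]
  exact hpq.eq_of_length (hpq.length_le.antisymm hqp.length_le)

/-- Application of a pattern-valued substitution to a pattern. -/
def substPat (σ : V → Pat A V) (p : Pat A V) : Pat A V :=
  p.flatMap (Sum.elim (fun a => [Sum.inl a]) σ)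

/-- Componentwise application of a pattern-valued substitution to a tuple pattern. -/
def substTP (σ : V → Pat A V) (t : TP A V) : TP A V :=
  t.map (substPat σ)

@[simp]
theorem substPat_singleton (σ : V → Pat A V) (s : A ⊕ V) :
    substPat σ [s] = Sum.elim (fun a => [Sum.inl a]) σ s :=
  List.flatMap_singleton ..

theorem substPatW_substPat (θ : V → Word A) (σ : V → Pat A V) (p : Pat A V) :
    substPatW θ (substPat σ p) = substPatW (fun x => substPatW θ (σ x)) p := by
  simp only [substPat, substPatW_eq_flatMap, List.flatMap_assoc]
  congr 1
  funext s
  cases s <;> simp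

theorem map_substPatW_substTP (θ : V → Word A) (σ : V → Pat A V) (t : TP A V) :
    (substTP σ t).map (substPatW θ) = t.map (substPatW fun x => substPatW θ (σ x)) := by
  simp only [substTP, List.map_map, Function.comp_def, substPatW_substPat]

theorem mem_substPat_of_mem {σ : V → Pat A V} {x : V} (hx : Sum.inr x ∈ p) (hs : s ∈ σ x) :
    s ∈ substPat σ p :=
  List.mem_flatMap.2 ⟨Sum.inr x, hx, hs⟩

theorem exists_of_var_mem_substPat {σ : V → Pat A V} {y : V} (h : Sum.inr y ∈ substPat σ p) :
    ∃ x, Sum.inr x ∈ p ∧ Sum.inr y ∈ σ x := by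
  obtain ⟨a | x, hs, hy⟩ := List.mem_flatMap.1 h
  · simp at hy
  · exact ⟨x, hs, hy⟩

theorem mem_fvTP {t : TP A V} {x : V} : x ∈ fvTP t ↔ ∃ p ∈ t, Sum.inr x ∈ p :=
  List.mem_flatten

theorem mem_fvTP_substTP {σ : V → Pat A V} {t : TP A V} {y : V} :
    y ∈ fvTP (substTP σ t) ↔ ∃ x ∈ fvTP t, Sum.inr y ∈ σ x := by
  simp only [mem_fvTP, substTP, List.mem_map]
  constructor
  · rintro ⟨_, ⟨p, hp, rfl⟩, hy⟩
    obtain ⟨x, hx, hyx⟩ := exists_of_var_mem_substPat hy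
    exact ⟨x, ⟨p, hp, hx⟩, hyx⟩
  · rintro ⟨x, ⟨p, hp, hx⟩, hyx⟩
    exact ⟨_, ⟨p, hp, rfl⟩, mem_substPat_of_mem hx hyx⟩

theorem map_substPatW_congr {t : TP A V} (h : ∀ x ∈ fvTP t, θ x = θ' x) :
    t.map (substPatW θ) = t.map (substPatW θ') :=
  List.map_congr_left fun p hp => substPatW_congr fun x hx => h x (mem_fvTP.2 ⟨p, hp, hx⟩)

theorem substTP_eq_renameTP {σ : V → Pat A V} {ρ : V → V} {t : TP A V}
    (h : ∀ x ∈ fvTP t, σ x = [Sum.inr (ρ x)]) : substTP σ t = renameTP ρ t := by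
  refine List.map_congr_left fun p hp => ?_
  have hfun : ∀ s ∈ p, Sum.elim (fun a => [Sum.inl a]) σ s = [Sum.map id ρ s] := by
    rintro (a | x) hs
    exacts [rfl, h x (mem_fvTP.2 ⟨p, hp, hs⟩)]
  rw [substPat, List.flatMap_congr hfun, ← List.map_eq_flatMap]

theorem renameTP_eq_substTP (ρ : V → V) (t : TP A V) :
    renameTP ρ t = substTP (fun x => [Sum.inr (ρ x)]) t :=
  (substTP_eq_renameTP fun _ _ => rfl).symm

theorem lang_renameTP {ρ : V → V} {t : TP A V} (hρ : Set.InjOn ρ (fvTP t)) :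
    lang (renameTP ρ t) = lang t := by
  have happly (θ : V → Word A) :
      (renameTP ρ t).map (substPatW θ) = t.map (substPatW (θ ∘ ρ)) := by
    simp [renameTP_eq_substTP, map_substPatW_substTP, Function.comp_def]
  apply Set.Subset.antisymm
  · rintro _ ⟨θ, rfl⟩
    exact ⟨θ ∘ ρ, happly θ⟩
  · rintro _ ⟨θ, rfl⟩
    refine ⟨Function.extend ((fvTP t).domRestrict ρ) ((fvTP t).domRestrict θ) fun _ => [], ?_⟩
    rw [happly]
    exact map_substPatW_congr fun x hx =>
      ((Set.injOn_iff_injective.1 hρ).extend_apply ((fvTP t).domRestrict θ) _ ⟨x, hx⟩).symm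

end Substitution

section Determined

variable {s t t₀ t₁ : TP A V}

/-- The constant patterns of length one together with the components of `t`. -/
def generators (t : TP A V) : Language (A ⊕ V) :=
  {p | (∃ a, p = [Sum.inl a]) ∨ p ∈ t}

/-- Every variable of `t` can be obtained from the letters and the components of `t` by
concatenation and left cancellation. -/
def DeterminesVars (t : TP A V) : Prop :=
  ∀ x ∈ fvTP t, [Sum.inr x] ∈ leftUnitaryClosure (generators t)

theorem generators_le_iff {L : Language (A ⊕ V)} :
    generators t ≤ L ↔ (∀ a, [Sum.inl a] ∈ L) ∧ ∀ p ∈ t, p ∈ L := by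
  refine ⟨fun h => ⟨fun a => h (Or.inl ⟨a, rfl⟩), fun p hp => h (Or.inr hp)⟩, ?_⟩
  rintro ⟨hletter, hcomp⟩ p (⟨a, rfl⟩ | hp)
  exacts [hletter a, hcomp p hp]

theorem letter_mem_leftUnitaryClosure (t : TP A V) (a : A) :
    [Sum.inl a] ∈ leftUnitaryClosure (generators t) :=
  (generators_le_iff.1 (le_leftUnitaryClosure _)).1 a

theorem component_mem_leftUnitaryClosure {p : Pat A V} (hp : p ∈ t) :
    p ∈ leftUnitaryClosure (generators t) :=
  (generators_le_iff.1 (le_leftUnitaryClosure _)).2 p hp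

theorem generators_cons (p : Pat A V) (t : TP A V) :
    generators (p :: t) = insert p (generators t) := by
  ext q
  change (_ ∨ q ∈ p :: t) ↔ (q = p ∨ _ ∨ q ∈ t)
  rw [List.mem_cons, or_left_comm]

theorem generators_eq_of_perm (h : s.Perm t) : generators s = generators t := by
  ext q
  exact or_congr_right h.mem_iff

theorem substPat_mem_leftUnitaryClosure (σ : V → Pat A V) {p : Pat A V}
    (hp : p ∈ leftUnitaryClosure (generators t)) :
    substPat σ p ∈ leftUnitaryClosure (generators (substTP σ t)) := by
  have hpre := (isLeftUnitary_leftUnitaryClosure (generators (substTP σ t))).flatMap_preimage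
    (Sum.elim (fun a => [Sum.inl a]) σ)
  refine hp _ hpre (generators_le_iff.2 ⟨fun a => ?_, fun q hq => ?_⟩)
  · exact letter_mem_leftUnitaryClosure _ a
  · exact component_mem_leftUnitaryClosure (List.mem_map_of_mem hq)

theorem mem_fvTP_iff_exists_mem_leftUnitaryClosure {x : V} :
    x ∈ fvTP t ↔ ∃ p ∈ leftUnitaryClosure (generators t), Sum.inr x ∈ p := by
  constructor
  · intro hx
    obtain ⟨p, hp, hxp⟩ := mem_fvTP.1 hx
    exact ⟨p, component_mem_leftUnitaryClosure hp, hxp⟩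
  · rintro ⟨p, hp, hxp⟩
    refine hp _ (isLeftUnitary_forall_mem {s | ∀ x, s = Sum.inr x → x ∈ fvTP t})
      (generators_le_iff.2 ⟨fun a => ?_, fun q hq => ?_⟩) _ hxp x rfl
    · intro s hs y hy
      simp_all
    · rintro _ hs y rfl
      exact mem_fvTP.2 ⟨q, hq, hs⟩

theorem DeterminesVars.congr
    (h : leftUnitaryClosure (generators s) = leftUnitaryClosure (generators t))
    (ht : DeterminesVars t) : DeterminesVars s := by
  intro x hx
  rw [mem_fvTP_iff_exists_mem_leftUnitaryClosure, h,
    ← mem_fvTP_iff_exists_mem_leftUnitaryClosure] at hx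
  exact h ▸ ht x hx

theorem determinesVars_trivTP (ys : List V) : DeterminesVars (trivTP ys : TP A V) := by
  intro x hx
  obtain ⟨p, hp, hxp⟩ := mem_fvTP.1 hx
  obtain ⟨y, hy, rfl⟩ := List.mem_map.1 hp
  obtain rfl : x = y := by simpa using hxp
  exact component_mem_leftUnitaryClosure hp

theorem PStep.leftUnitaryClosure_eq (h : PStep s t) :
    leftUnitaryClosure (generators s) = leftUnitaryClosure (generators t) := by
  have split (j : ℕ) (hj : j < s.length) :
      generators s = insert s[j] (generators (s.eraseIdx j)) := by
    rw [← generators_cons]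
    exact generators_eq_of_perm (List.getElem_cons_eraseIdx_perm hj).symm
  have split_set (j : ℕ) (hj : j < s.length) (p : Pat A V) :
      generators (s.set j p) = insert p (generators (s.eraseIdx j)) := by
    rw [← generators_cons]
    exact generators_eq_of_perm (List.set_perm_cons_eraseIdx hj p)
  cases h with
  | pre i j hi hj hij p' hdec _ =>
    rw [split j hj, split_set j hj, hdec]
    exact leftUnitaryClosure_insert_append (component_mem_leftUnitaryClosure
      (List.mem_eraseIdx_iff_getElem.2 ⟨i, hi, hij, rfl⟩))
  | cpre j hj a p' hdec =>
    rw [split j hj, split_set j hj, hdec]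
    exact leftUnitaryClosure_insert_append (u := [Sum.inl a]) (letter_mem_leftUnitaryClosure _ a)
  | eps j hj heps =>
    rw [split j hj, heps]
    exact leftUnitaryClosure_insert_of_mem (isLeftUnitary_leftUnitaryClosure _).nil_mem

theorem Solvable.determinesVars (h : Solvable t) : DeterminesVars t := by
  obtain ⟨ys, -, hred⟩ := h
  induction hred using Relation.ReflTransGen.head_induction_on with
  | refl => exact determinesVars_trivTP ys
  | head hstep _ ih => exact ih.congr hstep.leftUnitaryClosure_eq

theorem DeterminesVars.eqOn (h : DeterminesVars t) {θ θ' : V → Word A}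
    (heq : t.map (substPatW θ) = t.map (substPatW θ')) : Set.EqOn θ θ' (fvTP t) := by
  intro x hx
  have hmem : substPatW θ [Sum.inr x] = substPatW θ' [Sum.inr x] :=
    h x hx _ (isLeftUnitary_flatMap_eq (Sum.elim (fun a => [a]) θ) (Sum.elim (fun a => [a]) θ'))
      (generators_le_iff.2 ⟨fun a => rfl, List.map_inj_left.1 heq⟩)
  simpa using hmem

/-- The patterns `p` for which `θ ↦ (η θ) p` is again evaluation of a pattern at `θ`. -/
def liftablePatterns (η : (V → Word A) → V → Word A) : Language (A ⊕ V) :=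
  {p | ∃ q : Pat A V, ∀ θ, substPatW θ q = substPatW (η θ) p}

theorem isLeftUnitary_liftablePatterns [Nontrivial A] (η : (V → Word A) → V → Word A) :
    IsLeftUnitary (liftablePatterns η) where
  nil_mem := ⟨[], fun _ => rfl⟩
  append_mem := by
    rintro u v ⟨u', hu⟩ ⟨v', hv⟩
    exact ⟨u' ++ v', fun θ => by simp [hu, hv]⟩
  of_append_mem := by
    rintro u v ⟨u', hu⟩ ⟨w, hw⟩
    obtain ⟨v', rfl⟩ : u' <+: w := prefix_of_forall_substPatW_prefix fun θ => by
      rw [hu, hw, substPatW_append]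
      exact List.prefix_append _ _
    refine ⟨v', fun θ => ?_⟩
    have huv := hw θ
    rw [substPatW_append, substPatW_append, hu] at huv
    exact List.append_cancel_left huv

theorem DeterminesVars.exists_eq_substTP [Nontrivial A] (ht₁ : DeterminesVars t₁)
    (hsub : lang t₀ ⊆ lang t₁) : ∃ σ : V → Pat A V, t₀ = substTP σ t₁ := by
  choose η hη using fun θ : V → Word A => hsub ⟨θ, rfl⟩
  have hlen : t₀.length = t₁.length := by simpa using congrArg List.length (hη fun _ => [])
  have hcomp : ∀ i (h₀ : i < t₀.length) (_ : i < t₁.length) θ,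
      substPatW θ t₀[i] = substPatW (η θ) t₁[i] := fun i h₀ _ θ => by
    have hi := List.getElem_of_eq (hη θ) (i := i) (by simpa using h₀)
    simpa using hi
  have hgen : generators t₁ ≤ liftablePatterns η := by
    refine generators_le_iff.2 ⟨fun a => ⟨[Sum.inl a], fun _ => rfl⟩, fun p hp => ?_⟩
    obtain ⟨i, hi, rfl⟩ := List.getElem_of_mem hp
    exact ⟨t₀[i], hcomp i (hlen ▸ hi) hi⟩
  have hlift : ∀ x ∈ fvTP t₁, ∃ q : Pat A V, ∀ θ, substPatW θ q = η θ x := by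
    intro x hx
    obtain ⟨q, hq⟩ := ht₁ x hx _ (isLeftUnitary_liftablePatterns η) hgen
    exact ⟨q, by simpa using hq⟩
  choose! σ hσ using hlift
  refine ⟨σ, List.ext_getElem (by simp [substTP, hlen]) fun i h₀ _ => ?_⟩
  have h₁ : i < t₁.length := hlen ▸ h₀
  simp only [substTP, List.getElem_map]
  refine eq_of_forall_substPatW_eq fun θ => ?_
  rw [hcomp i h₀ h₁, substPatW_substPat]
  exact substPatW_congr fun x hx =>
    (hσ x (mem_fvTP.2 ⟨_, List.getElem_mem h₁, hx⟩) θ).symm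

end Determined

section Irreducible

variable {σ : V → Pat A V} {S : Set V} {t : TP A V}

/-- No value of `σ` on `S` can be shortened by a rule of `⟶`: it is not `ε`, does not begin with a
letter, and does not begin with the value of `σ` at another variable in `S`. -/
structure IrreducibleOn (σ : V → Pat A V) (S : Set V) : Prop where
  ne_nil {x : V} : x ∈ S → σ x ≠ []
  ne_letter_cons {x : V} {a : A} {p : Pat A V} : x ∈ S → σ x ≠ Sum.inl a :: p
  eq_of_prefix {x y : V} : x ∈ S → y ∈ S → σ x <+: σ y → x = y

/-- The constant patterns of length one together with the values of `σ` on `S`. -/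
def codewords (σ : V → Pat A V) (S : Set V) : Language (A ⊕ V) :=
  {p | (∃ a, p = [Sum.inl a]) ∨ ∃ x ∈ S, p = σ x}

theorem IrreducibleOn.isPrefixCode (h : IrreducibleOn σ S) : IsPrefixCode (codewords σ S) where
  nil_notMem := by
    rintro (⟨a, ha⟩ | ⟨x, hx, hnil⟩)
    · exact List.cons_ne_nil _ _ ha.symm
    · exact h.ne_nil hx hnil.symm
  eq_of_prefix := by
    rintro _ _ (⟨a, rfl⟩ | ⟨x, hx, rfl⟩) (⟨b, rfl⟩ | ⟨y, hy, rfl⟩) hpre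
    · simpa using hpre
    · obtain ⟨p, hp⟩ := hpre
      exact absurd hp.symm (h.ne_letter_cons hy)
    · rcases List.prefix_cons_iff.1 hpre with hnil | ⟨p, hp, -⟩
      · exact absurd hnil (h.ne_nil hx)
      · exact absurd hp (h.ne_letter_cons hx)
    · rw [h.eq_of_prefix hx hy hpre]

theorem substPat_mem_kstar_codewords {p : Pat A V} (hp : ∀ x, Sum.inr x ∈ p → x ∈ S) :
    substPat σ p ∈ (codewords σ S)∗ := by
  refine Language.join_mem_kstar fun q hq => ?_
  obtain ⟨a | x, hs, rfl⟩ := List.mem_map.1 hq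
  · exact Or.inl ⟨a, rfl⟩
  · exact Or.inr ⟨x, hp x hs, rfl⟩

theorem IrreducibleOn.exists_eq_singleton (h : IrreducibleOn σ (fvTP t))
    (hdet : DeterminesVars (substTP σ t)) {x : V} (hx : x ∈ fvTP t) :
    ∃ z, σ x = [Sum.inr z] := by
  have hgen : generators (substTP σ t) ≤ (codewords σ (fvTP t))∗ := by
    refine generators_le_iff.2 ⟨fun a => ?_, fun q hq => ?_⟩
    · exact le_kstar (a := codewords σ (fvTP t)) (Or.inl ⟨a, rfl⟩)
    · obtain ⟨p, hp, rfl⟩ := List.mem_map.1 hq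
      exact substPat_mem_kstar_codewords fun y hy => mem_fvTP.2 ⟨p, hp, hy⟩
  cases hσx : σ x with
  | nil => exact absurd hσx (h.ne_nil hx)
  | cons s p =>
    cases s with
    | inl a => exact absurd hσx (h.ne_letter_cons hx)
    | inr z =>
      have hz : z ∈ fvTP (substTP σ t) := mem_fvTP_substTP.2 ⟨x, hx, by simp [hσx]⟩
      have hcode : [Sum.inr z] ∈ codewords σ (fvTP t) :=
        singleton_mem_of_mem_kstar (hdet z hz _ h.isPrefixCode.isLeftUnitary_kstar hgen)
      obtain ⟨a, ha⟩ | ⟨y, hy, hσy⟩ := hcode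
      · simp at ha
      · have hyx : y = x := h.eq_of_prefix hy hx (by simp [← hσy, hσx])
        exact ⟨z, by rw [← hσx, ← hyx, hσy]⟩

theorem IrreducibleOn.exists_eq_renameTP (h : IrreducibleOn σ (fvTP t))
    (hdet : DeterminesVars (substTP σ t)) :
    ∃ ρ : V → V, Set.InjOn ρ (fvTP t) ∧ substTP σ t = renameTP ρ t := by
  have hvar : ∀ x, ∃ z, x ∈ fvTP t → σ x = [Sum.inr z] := by
    intro x
    by_cases hx : x ∈ fvTP t
    · obtain ⟨z, hz⟩ := h.exists_eq_singleton hdet hx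
      exact ⟨z, fun _ => hz⟩
    · exact ⟨x, fun hx' => absurd hx' hx⟩
  choose ρ hρ using hvar
  refine ⟨ρ, fun x hx y hy hxy => h.eq_of_prefix hx hy ?_, substTP_eq_renameTP hρ⟩
  rw [hρ x hx, hρ y hy, hxy]

end Irreducible

section DataSubstitution

variable {Θ Θ' : DSub A V}

/-- The variables `x⃗` of a data-substitution `[M/x⃗]`. -/
def DSub.dom (Θ : DSub A V) : List V :=
  Θ.entries.map Prod.fst

theorem DSub.WF.perm {E E' : List (V × Col A)} {m : ℕ} (h : DSub.WF ⟨m, E⟩) (hE : E.Perm E') :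
    DSub.WF ⟨m, E'⟩ :=
  ⟨(hE.map Prod.fst).nodup_iff.1 h.1, fun e he => h.2 e (hE.mem_iff.2 he)⟩

theorem DSub.wf_cons {e : V × Col A} {E : List (V × Col A)} {m : ℕ} :
    DSub.WF ⟨m, e :: E⟩ ↔ (e.1 ∉ E.map Prod.fst ∧ e.2.length = m) ∧ DSub.WF ⟨m, E⟩ := by
  simp only [DSub.WF, List.map_cons, List.nodup_cons, List.forall_mem_cons]
  tauto

variable [DecidableEq V]

theorem lookupCol_eq_of_mem {E : List (V × Col A)} (hE : (E.map Prod.fst).Nodup) {e : V × Col A}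
    (he : e ∈ E) : lookupCol E e.1 = e.2 := by
  unfold lookupCol
  cases hfind : E.find? (fun e' => decide (e'.1 = e.1)) with
  | none => simpa using List.find?_eq_none.1 hfind e he
  | some e' =>
    have heq : e'.1 = e.1 := by simpa using List.find?_some hfind
    exact congrArg Prod.snd (List.inj_on_of_nodup_map hE (List.mem_of_find?_eq_some hfind) he heq)

theorem DSub.WF.rowSub_eq_getD (hΘ : Θ.WF) {e : V × Col A} (he : e ∈ Θ.entries) (k : ℕ) :
    Θ.rowSub k e.1 = e.2.getD k [] := by
  rw [DSub.rowSub, lookupCol_eq_of_mem hΘ.1 he]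

theorem DSub.WF.eq_map_rowSub (hΘ : Θ.WF) {e : V × Col A} (he : e ∈ Θ.entries) :
    e.2 = (List.range Θ.m).map fun k => Θ.rowSub k e.1 := by
  refine List.ext_getElem (by simp [hΘ.2 e he]) fun k hk _ => ?_
  simp [hΘ.rowSub_eq_getD he, hk]

theorem DSub.map_getD_apply {k : ℕ} (hk : k < Θ.m) (t : TP A V) :
    (Θ.apply t).map (fun c => c.getD k []) = t.map (substPatW (Θ.rowSub k)) := by
  simp [DSub.apply, Function.comp_def, hk]

theorem DSub.apply_substTP {σ : V → Pat A V} {t : TP A V} (hm : Θ'.m = Θ.m)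
    (h : ∀ k < Θ.m, ∀ x ∈ fvTP t, substPatW (Θ'.rowSub k) (σ x) = Θ.rowSub k x) :
    Θ'.apply (substTP σ t) = Θ.apply t := by
  rw [DSub.apply, substTP, List.map_map, hm]
  refine List.map_congr_left fun p hp => List.map_congr_left fun k hk => ?_
  rw [substPatW_substPat]
  exact substPatW_congr fun x hx => h k (List.mem_range.1 hk) x (mem_fvTP.2 ⟨p, hp, hx⟩)

end DataSubstitution

section Parse

variable [DecidableEq V] {M : Data A} {m : ℕ} {t : TP A V} {Θ : DSub A V}

/-- The invariant of the relation `⟶`: `Θ` sends `t` to the data, it is defined on the variables of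
`t`, and each of its variables is obtained from the letters and the components of `t` by
concatenation and left cancellation. -/
structure IsParse (M : Data A) (m : ℕ) (t : TP A V) (Θ : DSub A V) : Prop where
  rows : Θ.m = m
  wf : Θ.WF
  apply_eq : Θ.apply t = M
  mem_dom : ∀ x ∈ fvTP t, x ∈ Θ.dom
  var_mem : ∀ x ∈ Θ.dom, [Sum.inr x] ∈ leftUnitaryClosure (generators t)

theorem IsParse.determinesVars (h : IsParse M m t Θ) : DeterminesVars t :=
  fun x hx => h.var_mem x (h.mem_dom x hx)

theorem isParse_trivTP {xs : List V} (hxs : xs.Nodup) (hMn : M.length = xs.length)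
    (hcols : ∀ c ∈ M, c.length = m) : IsParse M m (trivTP xs) ⟨m, xs.zip M⟩ := by
  have hdom : (xs.zip M).map Prod.fst = xs := List.map_fst_zip hMn.ge
  have hwf : DSub.WF ⟨m, xs.zip M⟩ :=
    ⟨hdom.symm ▸ hxs, fun e he => hcols _ (List.of_mem_zip he).2⟩
  refine ⟨rfl, hwf, ?_, ?_, ?_⟩
  · refine List.ext_getElem (by simp [DSub.apply, trivTP, hMn]) fun i h₁ h₂ => ?_
    have hi : i < xs.length := hMn ▸ h₂
    have hcol := hwf.eq_map_rowSub (e := (xs[i], M[i]))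
      (List.mem_iff_getElem.2 ⟨i, by simpa using ⟨hi, h₂⟩, List.getElem_zip ..⟩)
    simpa [DSub.apply, trivTP] using hcol.symm
  · intro x hx
    obtain ⟨_, hp, hxp⟩ := mem_fvTP.1 hx
    obtain ⟨y, hy, rfl⟩ := List.mem_map.1 hp
    obtain rfl : x = y := by simpa using hxp
    rwa [DSub.dom, hdom]
  · intro x hx
    rw [DSub.dom, hdom] at hx
    exact component_mem_leftUnitaryClosure (List.mem_map_of_mem hx)

theorem IsParse.exists_entry {σ : V → Pat A V} (h : IsParse M m t Θ)
    (hM : Models M m (substTP σ t)) :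
    ∃ θ : ℕ → V → Word A, ∀ x ∈ fvTP t,
      (x, (List.range m).map fun k => substPatW (θ k) (σ x)) ∈ Θ.entries := by
  obtain ⟨Θ₀, hm, -, hΘ₀⟩ := hM
  refine ⟨Θ₀.rowSub, fun x hx => ?_⟩
  obtain ⟨⟨x, c⟩, he, rfl⟩ := List.mem_map.1 (h.mem_dom x hx)
  have hrow : ∀ k < m, Θ.rowSub k x = substPatW (Θ₀.rowSub k) (σ x) := fun k hk => by
    refine h.determinesVars.eqOn (θ' := fun y => substPatW (Θ₀.rowSub k) (σ y)) ?_ hx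
    rw [← map_substPatW_substTP, ← DSub.map_getD_apply (h.rows.symm ▸ hk), h.apply_eq,
      ← DSub.map_getD_apply (hm.symm ▸ hk), hΘ₀]
  have hc : c = (List.range m).map fun k => substPatW (Θ₀.rowSub k) (σ x) := by
    refine (h.wf.eq_map_rowSub he).trans ?_
    rw [h.rows]
    exact List.map_congr_left fun k hk => hrow k (List.mem_range.1 hk)
  exact hc ▸ he

end Parse

section Inference

variable [DecidableEq V] {M : Data A} {m : ℕ} {t : TP A V} {Θ Θ' : DSub A V}
  {x : V} {c : Col A} {q : Pat A V} {R : List (V × Col A)}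

theorem IsParse.ne_of_mem (h : IsParse M m t Θ) (hE : Θ.entries.Perm ((x, c) :: R)) {y : V}
    (hy : y ∈ R.map Prod.fst) : y ≠ x := by
  rintro rfl
  exact (DSub.wf_cons.1 (h.wf.perm hE)).1.1 hy

variable [DecidableEq A]

theorem substVarTP_eq_substTP (x : V) (q : Pat A V) (t : TP A V) :
    substVarTP x q t = substTP (Function.update (fun y => [Sum.inr y]) x q) t := by
  refine List.map_congr_left fun p _ => congrArg List.flatten (List.map_congr_left ?_)
  rintro (a | y) -
  · simp
  · by_cases hy : y = x <;> simp [hy]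

theorem IsParse.var_mem_substVarTP (h : IsParse M m t Θ) {y : V} (hy : y ∈ Θ.dom) (hyx : y ≠ x) :
    [Sum.inr y] ∈ leftUnitaryClosure (generators (substVarTP x q t)) := by
  have hmem := substPat_mem_leftUnitaryClosure (Function.update (fun y => [Sum.inr y]) x q)
    (h.var_mem y hy)
  simpa [substVarTP_eq_substTP, hyx] using hmem

theorem IsParse.pattern_mem_substVarTP (h : IsParse M m t Θ) (hx : x ∈ Θ.dom) :
    q ∈ leftUnitaryClosure (generators (substVarTP x q t)) := by
  have hmem := substPat_mem_leftUnitaryClosure (Function.update (fun y => [Sum.inr y]) x q)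
    (h.var_mem x hx)
  simpa [substVarTP_eq_substTP] using hmem

theorem IsParse.refine (h : IsParse M m t Θ) (hE : Θ.entries.Perm ((x, c) :: R))
    (hm : Θ'.m = m) (hwf : Θ'.WF) (hR : R ⊆ Θ'.entries)
    (hrow : ∀ k < m, substPatW (Θ'.rowSub k) q = Θ.rowSub k x)
    (hdom : ∀ y, Sum.inr y ∈ q → y ∈ Θ'.dom)
    (hvar : ∀ y ∈ Θ'.dom, y ∉ R.map Prod.fst →
      [Sum.inr y] ∈ leftUnitaryClosure (generators (substVarTP x q t))) :
    IsParse M m (substVarTP x q t) Θ' := by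
  have split (y : V) (hy : y ∈ fvTP t) : y = x ∨ ∃ d, y ≠ x ∧ (y, d) ∈ R := by
    obtain ⟨⟨y, d⟩, he, rfl⟩ := List.mem_map.1 (h.mem_dom y hy)
    rcases List.mem_cons.1 (hE.mem_iff.1 he) with heq | heR
    · exact Or.inl (congrArg Prod.fst heq)
    · exact Or.inr ⟨d, h.ne_of_mem hE (List.mem_map_of_mem heR), heR⟩
  refine ⟨hm, hwf, ?_, ?_, ?_⟩
  · rw [← h.apply_eq, substVarTP_eq_substTP]
    refine DSub.apply_substTP (hm.trans h.rows.symm) fun k hk y hy => ?_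
    rcases split y hy with rfl | ⟨d, hyx, hd⟩
    · simpa using hrow k (h.rows ▸ hk)
    · have hd' : (y, d) ∈ Θ.entries := hE.mem_iff.2 (List.mem_cons_of_mem _ hd)
      simpa [hyx] using (hwf.rowSub_eq_getD (hR hd) k).trans (h.wf.rowSub_eq_getD hd' k).symm
  · intro z hz
    rw [substVarTP_eq_substTP, mem_fvTP_substTP] at hz
    obtain ⟨y, hy, hzy⟩ := hz
    rcases split y hy with rfl | ⟨d, hyx, hd⟩
    · exact hdom z (by simpa using hzy)
    · obtain rfl : z = y := by simpa [hyx] using hzy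
      exact List.mem_map_of_mem (hR hd)
  · intro y hy
    by_cases hyR : y ∈ R.map Prod.fst
    · obtain ⟨e, he, rfl⟩ := List.mem_map.1 hyR
      exact h.var_mem_substVarTP (List.mem_map_of_mem (hE.mem_iff.2 (List.mem_cons_of_mem _ he)))
        (h.ne_of_mem hE hyR)
    · exact hvar y hy hyR

theorem IsParse.erase (h : IsParse M m t Θ) (hE : Θ.entries.Perm ((x, c) :: R)) (hc : allEps c) :
    IsParse M m (substVarTP x [] t) ⟨m, R⟩ := by
  have hwf : DSub.WF ⟨m, R⟩ := h.rows ▸ (DSub.wf_cons.1 (h.wf.perm hE)).2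
  have hxc : (x, c) ∈ Θ.entries := hE.mem_iff.2 List.mem_cons_self
  refine h.refine hE rfl hwf (List.Subset.refl R) (fun k hk => ?_) (by simp)
    fun y hy hyR => absurd hy hyR
  have hkc : k < c.length := (h.wf.2 _ hxc).symm ▸ h.rows.symm ▸ hk
  rw [substPatW_nil, h.wf.rowSub_eq_getD hxc, List.getD_eq_getElem _ _ hkc]
  exact (hc _ (List.getElem_mem hkc)).symm

theorem IsParse.split (h : IsParse M m t Θ) (hE : Θ.entries.Perm ((x, c) :: R))
    {E' : List (V × Col A)} {x' : V} {s : Col A} (hE' : E'.Perm ((x', s) :: R))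
    {l : A ⊕ V} (hl : ∀ y, l = Sum.inr y → y ∈ R.map Prod.fst)
    (hx' : x' ∉ Θ.dom) (hs : s.length = m)
    (hrow : ∀ k < m, Θ.rowSub k x = substPatW (Θ.rowSub k) [l] ++ s.getD k []) :
    IsParse M m (substVarTP x [l, Sum.inr x'] t) ⟨m, E'⟩ := by
  have hRΘ : R ⊆ Θ.entries := fun e he => hE.mem_iff.2 (List.mem_cons_of_mem _ he)
  have hRE' : R ⊆ E' := fun e he => hE'.mem_iff.2 (List.mem_cons_of_mem _ he)
  have hx'E' : (x', s) ∈ E' := hE'.mem_iff.2 List.mem_cons_self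
  have hwf : DSub.WF ⟨m, E'⟩ := by
    have hR : DSub.WF ⟨m, R⟩ := h.rows ▸ (DSub.wf_cons.1 (h.wf.perm hE)).2
    exact (DSub.wf_cons.2 ⟨⟨fun hx'R => hx' (List.map_subset _ hRΘ hx'R), hs⟩, hR⟩).perm hE'.symm
  refine h.refine hE rfl hwf hRE' (fun k hk => ?_) (fun y hy => ?_) fun y hy hyR => ?_
  · have hletter : substPatW (DSub.rowSub ⟨m, E'⟩ k) [l] = substPatW (Θ.rowSub k) [l] := by
      refine substPatW_congr fun y hy => ?_
      obtain ⟨e, he, rfl⟩ := List.mem_map.1 (hl y (List.mem_singleton.1 hy).symm)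
      exact (hwf.rowSub_eq_getD (hRE' he) k).trans (h.wf.rowSub_eq_getD (hRΘ he) k).symm
    have hfresh : DSub.rowSub ⟨m, E'⟩ k x' = s.getD k [] := hwf.rowSub_eq_getD hx'E' k
    rw [hrow k hk, ← hletter, ← hfresh]
    simp
  · rcases List.mem_pair.1 hy with hyl | hyx'
    · exact List.map_subset _ hRE' (hl y hyl.symm)
    · exact Sum.inr_injective hyx' ▸ List.mem_map_of_mem hx'E'
  · obtain ⟨e, he, rfl⟩ := List.mem_map.1 hy
    rcases List.mem_cons.1 (hE'.mem_iff.1 he) with rfl | heR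
    · refine (isLeftUnitary_leftUnitaryClosure _).of_append_mem (u := [l]) ?_
        (h.pattern_mem_substVarTP (List.mem_map_of_mem (hE.mem_iff.2 List.mem_cons_self)))
      rcases l with a | y
      · exact letter_mem_leftUnitaryClosure _ a
      · exact h.var_mem_substVarTP (List.map_subset _ hRΘ (hl y rfl)) (h.ne_of_mem hE (hl y rfl))
    · exact absurd (List.mem_map_of_mem heR) hyR

theorem IsParse.step {d d' : TP A V × DSub A V} (hstep : Step d d') (h : IsParse M m d.1 d.2) :
    IsParse M m d'.1 d'.2 := by
  have perm (E : List (V × Col A)) (j : ℕ) (hj : j < E.length) :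
      E.Perm (E[j] :: E.eraseIdx j) :=
    (List.getElem_cons_eraseIdx_perm hj).symm
  cases hstep with
  | pre t m' E i j hi hj hij s hslen hpre _ x' hx' _ =>
    obtain rfl : m' = m := h.rows
    have hlen : E[i].2.length = m' := h.wf.2 _ (List.getElem_mem hi)
    refine h.split (perm E j hj) (List.set_perm_cons_eraseIdx hj _) ?_ hx' (hslen.trans hlen)
      fun k hk => ?_
    · rintro _ ⟨⟩
      exact List.mem_map_of_mem (List.mem_eraseIdx_iff_getElem.2 ⟨i, hi, hij, rfl⟩)
    · have hki : k < E[i].2.length := hlen.symm ▸ hk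
      have hks : k < s.length := hslen.symm ▸ hki
      refine (h.wf.rowSub_eq_getD (List.getElem_mem hj) k).trans ?_
      rw [hpre]
      simp [h.wf.rowSub_eq_getD (List.getElem_mem hi), hki, hks]
  | cpre t m' E j hj a s hpre x' hx' _ =>
    obtain rfl : m' = m := h.rows
    have hlen : s.length = m' := by
      simpa [hpre] using h.wf.2 _ (List.getElem_mem hj)
    refine h.split (perm E j hj) (List.set_perm_cons_eraseIdx hj _) (by simp) hx' hlen
      fun k hk => ?_
    have hks : k < s.length := hlen.symm ▸ hk
    refine (h.wf.rowSub_eq_getD (List.getElem_mem hj) k).trans ?_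
    rw [hpre]
    simp [hks]
  | eps t m' E j hj heps =>
    obtain rfl : m' = m := h.rows
    exact h.erase (perm E j hj) heps

theorem IsParse.reflTransGen {d d' : TP A V × DSub A V} (hred : Relation.ReflTransGen Step d d')
    (h : IsParse M m d.1 d.2) : IsParse M m d'.1 d'.2 := by
  induction hred with
  | refl => exact h
  | tail _ hstep ih => exact ih.step hstep

end Inference

section NormalForm

theorem exists_fresh_var [Infinite V] (E : List (V × Col A)) (t : TP A V) :
    ∃ x : V, x ∉ E.map Prod.fst ∧ Sum.inr x ∉ t.flatten := by
  have hfin := (List.finite_toSet (E.map Prod.fst)).union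
    ((List.finite_toSet t.flatten).preimage (Sum.inr_injective (α := A) (β := V)).injOn)
  obtain ⟨x, hx⟩ := hfin.exists_notMem
  exact ⟨x, fun h => hx (Or.inl h), fun h => hx (Or.inr h)⟩

variable [DecidableEq A] [DecidableEq V] {M : Data A} {m : ℕ} {t : TP A V} {Θ : DSub A V}
  {σ : V → Pat A V} {e f : V × Col A}

theorem not_allEps_of_stuck (hstuck : ¬ ∃ d, Step (t, Θ) d) (he : e ∈ Θ.entries) :
    ¬ allEps e.2 := by
  intro heps
  obtain ⟨i, hi, rfl⟩ := List.getElem_of_mem he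
  exact hstuck ⟨_, Step.eps t Θ.m Θ.entries i hi heps⟩

theorem ne_map_cons_of_stuck [Infinite V] (hstuck : ¬ ∃ d, Step (t, Θ) d) (he : e ∈ Θ.entries)
    (a : A) (s : Col A) : e.2 ≠ s.map (a :: ·) := by
  intro hcol
  obtain ⟨i, hi, rfl⟩ := List.getElem_of_mem he
  obtain ⟨x', hx'E, hx't⟩ := exists_fresh_var Θ.entries t
  exact hstuck ⟨_, Step.cpre t Θ.m Θ.entries i hi a s hcol x' hx'E hx't⟩

theorem eq_of_zipWith_append_of_stuck [Infinite V] (hstuck : ¬ ∃ d, Step (t, Θ) d)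
    (he : e ∈ Θ.entries) (hf : f ∈ Θ.entries) {s : Col A} (hs : s.length = e.2.length)
    (hcol : f.2 = List.zipWith (· ++ ·) e.2 s) : e = f := by
  have heps := not_allEps_of_stuck hstuck he
  obtain ⟨i, hi, rfl⟩ := List.getElem_of_mem he
  obtain ⟨j, hj, rfl⟩ := List.getElem_of_mem hf
  obtain ⟨x', hx'E, hx't⟩ := exists_fresh_var Θ.entries t
  by_contra hne
  have hij : i ≠ j := fun hij => hne (by simp only [hij])
  exact hstuck ⟨_, Step.pre t Θ.m Θ.entries i j hi hj hij s hs hcol heps x' hx'E hx't⟩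

theorem IsParse.irreducibleOn [Infinite V] (h : IsParse M m t Θ)
    (hstuck : ¬ ∃ d, Step (t, Θ) d) (hM : Models M m (substTP σ t)) :
    IrreducibleOn σ (fvTP t) := by
  obtain ⟨θ, hθ⟩ := h.exists_entry hM
  refine ⟨fun hx hnil => ?_, fun {x a p} hx hcons => ?_, fun {x y} hx hy hpre => ?_⟩
  · exact not_allEps_of_stuck hstuck (hθ _ hx) (by simp [hnil, allEps])
  · exact ne_map_cons_of_stuck hstuck (hθ x hx) a ((List.range m).map fun k => substPatW (θ k) p)
      (by simp [hcons])
  · obtain ⟨p, hp⟩ := hpre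
    exact congrArg Prod.fst (eq_of_zipWith_append_of_stuck hstuck (hθ x hx) (hθ y hy)
      (s := (List.range m).map fun k => substPatW (θ k) p) (by simp)
      (by simp [← hp, List.zipWith_map]))

end NormalForm

theorem minimality_general
    [DecidableEq A] [DecidableEq V] [Nontrivial A] [Infinite V]
    (xs : List V) (hxs : xs.Nodup) (M : Data A) (m : ℕ)
    (hMn : M.length = xs.length) (hcols : ∀ c ∈ M, c.length = m)
    (t₁ : TP A V) (Θ₁ : DSub A V)
    (h : Relation.ReflTransGen Step (trivTP xs, ⟨m, xs.zip M⟩) (t₁, Θ₁))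
    (hstuck : ¬ ∃ c, Step (t₁, Θ₁) c)
    (t₀ : TP A V) (hsolv : Solvable t₀) (hM : Models M m t₀)
    (hsup : lang t₀ ⊆ lang t₁) :
    ∃ ρ : V → V, Set.InjOn ρ (fvTP t₁) ∧ t₀ = renameTP ρ t₁ := by
  have hparse : IsParse M m t₁ Θ₁ := (isParse_trivTP hxs hMn hcols).reflTransGen h
  obtain ⟨σ, rfl⟩ := hparse.determinesVars.exists_eq_substTP hsup
  exact (hparse.irreducibleOn hstuck hM).exists_eq_renameTP hsolv.determinesVars

/-- **Minimality of inferred patterns.**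
Suppose `((x₁,…,xₙ), [M/x⃗]) ⟶* (t₁, Θ₁)` where `(t₁, Θ₁)` admits no further step.
If `t₀` is a solvable tuple pattern with `M ⊨ t₀`, then `L(t₁) ⊇ L(t₀)` implies
`L(t₁) = L(t₀)`. -/
theorem minimality
    [DecidableEq A] [DecidableEq V] [Nontrivial A] [Countable V] [Infinite V]
    (xs : List V) (hxs : xs.Nodup) (M : Data A) (m : ℕ)
    (hMn : M.length = xs.length) (hcols : ∀ c ∈ M, c.length = m)
    (t₁ : TP A V) (Θ₁ : DSub A V)
    (h : Relation.ReflTransGen Step (trivTP xs, ⟨m, xs.zip M⟩) (t₁, Θ₁))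
    (hstuck : ¬ ∃ c, Step (t₁, Θ₁) c)
    (t₀ : TP A V) (hsolv : Solvable t₀) (hM : Models M m t₀)
    (hsup : lang t₀ ⊆ lang t₁) :
    lang t₁ = lang t₀ := by
  obtain ⟨ρ, hρ, rfl⟩ :=
    minimality_general xs hxs M m hMn hcols t₁ Θ₁ h hstuck t₀ hsolv hM hsup
  exact (lang_renameTP hρ).symm

end STPaper
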